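/- Let M be an acyclic module over a finite alphabet Λ with finite node set S and finite input set I. Then every node s ∈ S has exactly one output function of minimal delay: the set of integers m ≥ 1 for which s admits an output function of delay m is nonempty, and letting d be its minimum, there is a unique function O_s : (Λ^I)^d → Λ such that M(x,J)_s = O_s(J) for every x ∈ Λ^S and every sequence J of d input configurations. -/

import Mathlib

/-- A module over alphabet `Λ` with node set `S` and input set `I`:
a family of local functions `f s : Λ^S → Λ^I → Λ`. -/
structure AModule (Λ S I : Type) where
  f : S → (S → Λ) → (I → Λ) → Λ

namespace AModule

variable {Λ S I : Type}

/-- One-step update `M(x,i)`. -/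
def upd (M : AModule Λ S I) (x : S → Λ) (i : I → Λ) : S → Λ :=
  fun s => M.f s x i

/-- Iterated update `M(x,(i_1,…,i_m))`, defined by
`M(x,∅) = x` and `M(x,(i_1,…,i_m)) = M(M(x,i_1),(i_2,…,i_m))`. -/
def seqUpd (M : AModule Λ S I) (x : S → Λ) {m : ℕ} (J : Fin m → I → Λ) : S → Λ :=
  (List.ofFn J).foldl M.upd x

/-- Node `s` influences node `s'`: two configurations over `S ∪ I` differing
exactly at `s` (so with the same input part) on which `f_{s'}` differs. -/
def Influences (M : AModule Λ S I) (s s' : S) : Prop :=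
  ∃ (x x' : S → Λ) (i : I → Λ),
    (∀ r, r ≠ s → x r = x' r) ∧ x s ≠ x' s ∧ M.f s' x i ≠ M.f s' x' i

/-- `M` is acyclic: its interaction digraph has no directed cycle. -/
def Acyclic (M : AModule Λ S I) : Prop :=
  ∀ s, ¬ Relation.TransGen M.Influences s s

/-- `O` is an output function of delay `m` for node `s`. -/
def IsOutputFn (M : AModule Λ S I) (s : S) {m : ℕ}
    (O : (Fin m → I → Λ) → Λ) : Prop :=
  ∀ (x : S → Λ) (J : Fin m → I → Λ), M.seqUpd x J s = O J

/-- The set of delays `m ≥ 1` for which `s` admits an output function. -/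
def delaySet (M : AModule Λ S I) (s : S) : Set ℕ :=
  {m | 1 ≤ m ∧ ∃ O : (Fin m → I → Λ) → Λ, M.IsOutputFn s O}

/-- The complete recursive wiring `↻_ω M` as a map on configurations:
`F(x)_s = f_s(x, (x_{ω(α)})_{α ∈ I})`. -/
def wireF (M : AModule Λ S I) (ω : I → S) : (S → Λ) → (S → Λ) :=
  fun x => M.upd x (fun α => x (ω α))

/-- The input sequence of length `k` generated by `x`:
`Ĵ(x)^k_ℓ = F^{ℓ-1}(x)|_{ω(I)}`. -/
def genSeq (M : AModule Λ S I) (ω : I → S) (x : S → Λ) (k : ℕ) :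
    Fin k → I → Λ :=
  fun ℓ α => (M.wireF ω)^[ℓ.val] x (ω α)

end AModule

theorem AModule.f_congr {Λ S I : Type} [Fintype S] (M : AModule Λ S I) (s : S)
    (x x' : S → Λ) (i : I → Λ) (h : ∀ r, M.Influences r s → x r = x' r) :
    M.f s x i = M.f s x' i := by
  classical
  have key : ∀ T : Finset S, M.f s x i = M.f s (T.piecewise x' x) i := by
    intro T
    induction T using Finset.induction_on with
    | empty => simp
    | insert a T ha ih =>
      rw [ih]
      by_contra hne
      have hpa : T.piecewise x' x a = x a := Finset.piecewise_eq_of_notMem _ _ _ ha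
      have hqa : (insert a T).piecewise x' x a = x' a :=
        Finset.piecewise_eq_of_mem _ _ _ (Finset.mem_insert_self a T)
      have hoff : ∀ r, r ≠ a → T.piecewise x' x r = (insert a T).piecewise x' x r := by
        intro r hr
        simp [Finset.piecewise, hr]
      by_cases hxa : x a = x' a
      · apply hne
        congr 1
        funext r
        by_cases hr : r = a
        · subst hr
          rw [hpa, hqa, hxa]
        · exact hoff r hr
      · exact hxa (h a ⟨_, _, i, hoff, by rw [hpa, hqa]; exact hxa, hne⟩)
  simpa using key Finset.univ

theorem AModule.exists_delay {Λ S I : Type} [Fintype S] (M : AModule Λ S I)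
    (hM : M.Acyclic) (s : S) :
    ∃ m : ℕ, ∀ (L : List (I → Λ)), m ≤ L.length → ∀ x x' : S → Λ,
      L.foldl M.upd x s = L.foldl M.upd x' s := by
  classical
  haveI : Std.Irrefl (Relation.TransGen M.Influences) := ⟨hM⟩
  have wf : WellFounded (Relation.TransGen M.Influences) :=
    Finite.wellFounded_of_trans_of_irrefl _
  induction s using wf.induction with
  | _ s ih =>
    have ih' : ∀ r, ∃ m : ℕ, M.Influences r s → ∀ (L : List (I → Λ)), m ≤ L.length →
        ∀ x x' : S → Λ, L.foldl M.upd x r = L.foldl M.upd x' r := by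
      intro r
      by_cases hr : M.Influences r s
      · obtain ⟨m, hm⟩ := ih r (Relation.TransGen.single hr)
        exact ⟨m, fun _ => hm⟩
      · exact ⟨0, fun h => absurd h hr⟩
    choose m hm using ih'
    refine ⟨Finset.univ.sup m + 1, ?_⟩
    intro L hL x x'
    rcases List.eq_nil_or_concat L with rfl | ⟨L', i, rfl⟩
    · simp at hL
    · simp only [List.concat_eq_append, List.foldl_append, List.foldl_cons, List.foldl_nil,
        List.length_append, List.length_singleton] at hL ⊢
      apply M.f_congr
      intro r hr
      have := Finset.le_sup (f := m) (Finset.mem_univ r)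
      exact hm r hr L' (by omega) x x'

/-- every node of an acyclic module has exactly one output
function of minimal delay. -/
theorem statement2 {Λ S I : Type} [Fintype Λ] [Fintype S] [Fintype I]
    (hΛ : 2 ≤ Fintype.card Λ)
    (M : AModule Λ S I) (hM : M.Acyclic) (s : S) :
    ∃ d : ℕ, IsLeast (M.delaySet s) d ∧
      ∃! O : (Fin d → I → Λ) → Λ, M.IsOutputFn s O := by
  classical
  haveI : Nonempty Λ := Fintype.card_pos_iff.mp (by omega)
  obtain ⟨a⟩ := ‹Nonempty Λ›
  have hne : (M.delaySet s).Nonempty := by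
    obtain ⟨m, hm⟩ := M.exists_delay hM s
    exact ⟨m + 1, by omega, fun J => M.seqUpd (fun _ => a) J s,
      fun x J => hm _ (by simp) _ _⟩
  refine ⟨sInf (M.delaySet s), ⟨Nat.sInf_mem hne, fun n hn => Nat.sInf_le hn⟩, ?_⟩
  obtain ⟨O, hO⟩ := (Nat.sInf_mem hne).2
  refine ⟨O, hO, fun O' hO' => ?_⟩
  funext J
  rw [← hO (fun _ => a) J, ← hO' (fun _ => a) J]
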